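/- arXiv:1605.02618 — 2 statements merged into one kernel-verified Lean document; each statement's English description precedes it below -/
import Mathlib

section
/- For all integers n ≥ 2 and all integers k ≥ 0 one has the recurrence (in ℤ): R⁺(n,k) = 2k·R⁺(n−1,k) + (2n−4k+2)·R⁺(n−1,k−1) + R(n−1,k), where terms with second argument −1 vanish. -/
/-!
Every signed permutation of rank `n` arises in exactly one way by inserting `n` or `-n` into the
word of a signed permutation `π` of rank `n - 1` (`ins_bijective`), and the result is simsun iff `π`
is simsun and the new word has no double descent (`isSimsun_ins`). The recurrence therefore follows
by counting, for a fixed simsun `π` with `d` descents, the admissible insertions that leave the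
first letter positive (`sum_ins`).

If `π(1) < 0`, the only such insertion is that of `n` in front; it keeps the descent number
(`sum_insert_of_neg`). If `π(1) > 0` (`sum_insert_of_pos`), inserting `n` keeps the descent number
in `d + 1` ways (at a descent or at the end) and raises it by one in `n - 1 - 2d` ways (at an ascent
not followed by a descent); inserting `-n` after `π(1)` keeps it in `d` ways (at a descent) and
raises it by one in `n - 1 - 2d` ways (at an ascent or at the end, not directly after a descent).
Hence `π` contributes `2d + 1` permutations with `d` descents and `2n - 2 - 4d` with `d + 1`
descents. Summing over `π`, with `d = k` and `d = k - 1` respectively, gives the claim, the extra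
summands `1` for both signs of `π(1)` adding up to `R(n-1,k)`.
-/

open Finset

/-- A signed permutation of rank `n`, encoded as an (unsigned) permutation of
`Fin n` together with a choice of sign for each position: the entry
`π(i+1)` of the word is `±(σ(i)+1)` where the sign is `-` iff `sgn i = true`. -/
abbrev SignedPerm (n : ℕ) := Equiv.Perm (Fin n) × (Fin n → Bool)

/-- The entry `π(j+1)` of the word of a signed permutation. -/
def entry {n : ℕ} (π : SignedPerm n) (j : Fin n) : ℤ :=
  (if π.2 j then -1 else 1) * (((π.1 j : ℕ) : ℤ) + 1)

/-- The word `π(0)π(1)⋯π(n)` of a signed permutation (with the leading `0`). -/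
def word {n : ℕ} (π : SignedPerm n) : List ℤ :=
  0 :: List.ofFn (entry π)

/-- `π(i)` for `0 ≤ i ≤ n` (and `0` outside this range). -/
def wordFn {n : ℕ} (π : SignedPerm n) (i : ℕ) : ℤ :=
  if h : 1 ≤ i ∧ i ≤ n then entry π ⟨i - 1, by omega⟩ else 0

/-- A word has no double descent: no three consecutive strictly decreasing entries. -/
def noDD : List ℤ → Bool
  | a :: b :: c :: rest => (!(decide (b < a) && decide (c < b))) && noDD (b :: c :: rest)
  | _ => true

/-- A signed permutation is simsun if for every `0 ≤ k ≤ n`, deleting the entries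
`±n, …, ±(n-k+1)` (i.e. keeping the entries of absolute value `≤ m := n - k`) from the
word `π(0)π(1)⋯π(n)` leaves a word with no three consecutive strictly decreasing
entries. -/
def IsSimsun {n : ℕ} (π : SignedPerm n) : Prop :=
  ∀ m ≤ n, noDD ((word π).filter (fun a => a.natAbs ≤ m)) = true

instance {n : ℕ} : DecidablePred (IsSimsun (n := n)) := fun _ => by
  unfold IsSimsun; infer_instance

/-- The type-B descent number `des_B(π) = #{0 ≤ i ≤ n-1 : π(i) > π(i+1)}`. -/
def desB {n : ℕ} (π : SignedPerm n) : ℕ :=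
  ((Finset.range n).filter (fun i => wordFn π (i + 1) < wordFn π i)).card

/-- The set of signed simsun permutations of rank `n`. -/
def RB (n : ℕ) : Finset (SignedPerm n) := univ.filter IsSimsun

/-- Signed simsun permutations with `π(1) > 0` (for `n = 0`, the empty permutation
is included, following the convention `R⁺_0 = 1`). -/
def RBp (n : ℕ) : Finset (SignedPerm n) :=
  (RB n).filter (fun π => 0 < wordFn π 1 ∨ n = 0)

/-- Signed simsun permutations with `π(1) < 0`. -/
def RBm (n : ℕ) : Finset (SignedPerm n) :=
  (RB n).filter (fun π => wordFn π 1 < 0)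

/-- A signed permutation is even-signed if its word has an even number of negative entries. -/
def IsEvenSigned {n : ℕ} (π : SignedPerm n) : Prop :=
  (univ.filter (fun j => π.2 j = true)).card % 2 = 0

instance {n : ℕ} : DecidablePred (IsEvenSigned (n := n)) := fun _ => by
  unfold IsEvenSigned; infer_instance

def RD (n : ℕ) : Finset (SignedPerm n) := (RB n).filter IsEvenSigned
def RT (n : ℕ) : Finset (SignedPerm n) := (RB n).filter (fun π => ¬ IsEvenSigned π)
def RDp (n : ℕ) : Finset (SignedPerm n) := (RD n).filter (fun π => 0 < wordFn π 1 ∨ n = 0)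
def RDm (n : ℕ) : Finset (SignedPerm n) := (RD n).filter (fun π => wordFn π 1 < 0)
def RTp (n : ℕ) : Finset (SignedPerm n) := (RT n).filter (fun π => 0 < wordFn π 1 ∨ n = 0)
def RTm (n : ℕ) : Finset (SignedPerm n) := (RT n).filter (fun π => wordFn π 1 < 0)

/-- `R(n,k)`, as an integer, vanishing for `k < 0`. -/
def Rcnt (n : ℕ) (k : ℤ) : ℤ := ((RB n).filter (fun π => (desB π : ℤ) = k)).card
def Rpcnt (n : ℕ) (k : ℤ) : ℤ := ((RBp n).filter (fun π => (desB π : ℤ) = k)).card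
def Rmcnt (n : ℕ) (k : ℤ) : ℤ := ((RBm n).filter (fun π => (desB π : ℤ) = k)).card
def Dcnt (n : ℕ) (k : ℤ) : ℤ := ((RD n).filter (fun π => (desB π : ℤ) = k)).card
def Tcnt (n : ℕ) (k : ℤ) : ℤ := ((RT n).filter (fun π => (desB π : ℤ) = k)).card
def Dpcnt (n : ℕ) (k : ℤ) : ℤ := ((RDp n).filter (fun π => (desB π : ℤ) = k)).card
def Dmcnt (n : ℕ) (k : ℤ) : ℤ := ((RDm n).filter (fun π => (desB π : ℤ) = k)).card
def Tpcnt (n : ℕ) (k : ℤ) : ℤ := ((RTp n).filter (fun π => (desB π : ℤ) = k)).card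
def Tmcnt (n : ℕ) (k : ℤ) : ℤ := ((RTm n).filter (fun π => (desB π : ℤ) = k)).card

/-! ### Insertion of an extreme letter into a word -/

/-- Number of descents of a word, as a recursion on lists. -/
def desL : List ℤ → ℕ
  | a :: b :: r => (if b < a then 1 else 0) + desL (b :: r)
  | _ => 0

/-- Indicator of a descent at the first place of a word. -/
def firstDes : List ℤ → ℕ
  | a :: b :: _ => if b < a then 1 else 0
  | _ => 0

lemma noDD_cons_cons (a b : ℤ) (r : List ℤ) :
    noDD (a :: b :: r) = true ↔ noDD (b :: r) = true ∧ ¬ (b < a ∧ firstDes (b :: r) = 1) := by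
  cases r <;> simp [noDD, firstDes]; grind

lemma desL_cons_cons (a b : ℤ) (r : List ℤ) :
    desL (a :: b :: r) = (if b < a then 1 else 0) + desL (b :: r) := rfl

lemma firstDes_cons_cons (a b : ℤ) (r : List ℤ) :
    firstDes (a :: b :: r) = if b < a then 1 else 0 := rfl

/-- Inserting a letter `N` larger than all others into a word `a :: l` with `d` descents and no
double descent, anywhere after `a`. The descent number is kept at the `d` descents and at the end;
it grows by one at an ascent, and the result is admissible iff that ascent is not followed by a
descent, which excludes one ascent for each descent other than a descent at the first place.
The arbitrary weight `f` of the descent number makes the induction on the word go through. -/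
lemma sum_insert_pos (N : ℤ) : ∀ (l : List ℤ) (a : ℤ) (f : ℕ → ℤ),
    (∀ x ∈ a :: l, x < N) → noDD (a :: l) = true →
    ∑ p ∈ range (l.length + 1),
        (if noDD (a :: l.insertIdx p N) = true then f (desL (a :: l.insertIdx p N)) else 0) =
      ((desL (a :: l) : ℤ) + 1) * f (desL (a :: l)) +
        ((l.length : ℤ) - 2 * desL (a :: l) + firstDes (a :: l)) * f (desL (a :: l) + 1) := by
  intro l
  induction l with
  | nil =>
    intro a f h _
    have : ¬ N < a := by have := h a (by simp); omega
    simp [noDD, desL, firstDes, this]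
  | cons b l ih =>
    intro a f h hw
    have ha : a < N := h a (by simp)
    have hb : b < N := h b (by simp)
    have hw' := (noDD_cons_cons _ _ _).1 hw
    have key : ∀ p ∈ range (l.length + 1),
        (if noDD (a :: (b :: l).insertIdx (p + 1) N) = true
          then f (desL (a :: (b :: l).insertIdx (p + 1) N)) else 0) =
        (if noDD (b :: l.insertIdx p N) = true
          then f ((if b < a then 1 else 0) + desL (b :: l.insertIdx p N)) else 0) := by
      intro p _
      have : noDD (a :: b :: l.insertIdx p N) = true ↔ noDD (b :: l.insertIdx p N) = true := by
        rw [noDD_cons_cons]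
        refine ⟨fun h => h.1, fun h => ⟨h, ?_⟩⟩
        cases p with
        | zero => simp [firstDes]; omega
        | succ p =>
          cases l with
          | nil => simp [firstDes]
          | cons c l => simpa [firstDes] using hw'.2
      simp only [List.insertIdx_succ_cons, this, desL_cons_cons]
    have h0 : noDD (a :: N :: b :: l) = true ↔ firstDes (b :: l) = 0 := by
      rw [noDD_cons_cons, noDD_cons_cons]
      cases l <;> simp_all [firstDes, ha.le]
    have h1 : desL (a :: N :: b :: l) = 1 + desL (b :: l) := by
      simp [desL_cons_cons, hb, ha.le]
    rw [List.length_cons, sum_range_succ', sum_congr rfl key,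
      ih b (fun d => f ((if b < a then 1 else 0) + d)) (fun x hx => h x (by simp_all)) hw'.1,
      List.insertIdx_zero, h1, desL_cons_cons]
    simp only [h0]
    have h2 : firstDes (b :: l) = 0 ∨ firstDes (b :: l) = 1 := by
      cases l <;> simp [firstDes]; grind
    by_cases hab : b < a
    · have h3 : firstDes (b :: l) = 0 := by tauto
      simp [hab, h3, firstDes_cons_cons, add_assoc]; ring_nf
    · rcases h2 with h3 | h3
      · simp [hab, h3, firstDes_cons_cons]; ring_nf
      · simp only [hab, h3, firstDes_cons_cons, if_false]; push_cast; simp; ring_nf; simp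

/-- Inserting a letter `N` smaller than all others into a word `a :: l` with `d` descents and no
double descent, anywhere after `a`. The descent number is kept at the `d` descents; it grows by one
at an ascent or at the end, and the result is admissible iff the gap is not directly preceded by a
descent, which excludes one gap for each descent. -/
lemma sum_insert_neg (N : ℤ) : ∀ (l : List ℤ) (a : ℤ) (f : ℕ → ℤ),
    (∀ x ∈ a :: l, N < x) → noDD (a :: l) = true →
    ∑ p ∈ range (l.length + 1),
        (if noDD (a :: l.insertIdx p N) = true then f (desL (a :: l.insertIdx p N)) else 0) =
      (desL (a :: l) : ℤ) * f (desL (a :: l)) +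
        ((l.length : ℤ) + 1 - 2 * desL (a :: l)) * f (desL (a :: l) + 1) := by
  intro l
  induction l with
  | nil =>
    intro a f h _
    have : N < a := h a (by simp)
    simp [noDD, desL, this]
  | cons b l ih =>
    intro a f h hw
    have ha : N < a := h a (by simp)
    have hb : N < b := h b (by simp)
    have hw' := (noDD_cons_cons _ _ _).1 hw
    have hle : ∀ l' : List ℤ, (∀ x ∈ l', N < x) → noDD l' = true → noDD (N :: l') = true := by
      intro l' h1 h2
      cases l' with
      | nil => simp [noDD]
      | cons c l' =>
        have := h1 c (by simp)
        rw [noDD_cons_cons]; exact ⟨h2, by omega⟩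
    have htl : noDD l = true := by
      cases l with
      | nil => simp [noDD]
      | cons c l => exact ((noDD_cons_cons _ _ _).1 hw'.1).1
    have h0 : ∀ (x : ℤ) (l' : List ℤ), (∀ y ∈ l', N < y) → noDD l' = true →
        noDD (x :: N :: l') = true := by
      intro x l' h1 h2
      rw [noDD_cons_cons]
      refine ⟨hle _ h1 h2, ?_⟩
      cases l' with
      | nil => simp [firstDes]
      | cons c l' =>
        have := h1 c (by simp)
        simp [firstDes]; omega
    have h1 : ∀ (x : ℤ) (l' : List ℤ), N < x → (∀ y ∈ l', N < y) →
        desL (x :: N :: l') = 1 + desL l' := by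
      intro x l' hx h1
      cases l' with
      | nil => simp [desL, hx]
      | cons c l' =>
        have := h1 c (by simp)
        simp [desL_cons_cons, hx, this.le]
    have hl : ∀ y ∈ l, N < y := fun y hy => h y (by simp [hy])
    have hbl : ∀ y ∈ b :: l, N < y := fun y hy => h y (by simp_all)
    -- The leading letter `a` matters only for the insertion directly after `b`, which is forbidden
    -- when `a > b`; the subtracted term accounts for it.
    have key : ∀ p ∈ range (l.length + 1),
        (if noDD (a :: (b :: l).insertIdx (p + 1) N) = true
          then f (desL (a :: (b :: l).insertIdx (p + 1) N)) else 0) =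
        (if noDD (b :: l.insertIdx p N) = true
          then f ((if b < a then 1 else 0) + desL (b :: l.insertIdx p N)) else 0) -
        (if p = 0 then (if b < a then f (2 + desL l) else 0) else 0) := by
      intro p _
      simp only [List.insertIdx_succ_cons, desL_cons_cons, noDD_cons_cons a]
      cases p with
      | zero =>
        by_cases hab : b < a
        · simp [hab, hb, firstDes, h0 b l hl htl, h1 b l hb hl]
          rw [← add_assoc, sub_self]
        · simp [hab]
      | succ p =>
        cases l with
        | nil => simp [firstDes, hw'.1]
        | cons c l =>
          have := hw'.2
          simp only [firstDes] at this
          simp [firstDes] at this ⊢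
          grind
    rw [List.length_cons, sum_range_succ', sum_congr rfl key, sum_sub_distrib,
      ih b (fun d => f ((if b < a then 1 else 0) + d)) hbl hw'.1,
      List.insertIdx_zero, h1 a _ ha hbl, desL_cons_cons, if_pos (h0 a _ hbl hw'.1)]
    by_cases hab : b < a
    · have h3 : desL (b :: l) = desL l := by
        cases l with
        | nil => simp [desL]
        | cons c l =>
          have := hw'.2
          simp [firstDes, hab] at this
          simp [desL_cons_cons, this]
      simp [hab, h3]; ring_nf
    · simp [hab]; ring_nf

/-- All admissible insertions of `±N` into a word `0, b, …` with `b > 0` that leave the letter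
after `0` positive: the letter `N` may go anywhere after `0`, the letter `-N` anywhere after `b`,
subject to creating no double descent. -/
lemma sum_insert_of_pos (N b : ℤ) (r : List ℤ) (f : ℕ → ℤ) (hb : 0 < b)
    (hN : ∀ x ∈ b :: r, -N < x ∧ x < N) (hw : noDD (0 :: b :: r) = true) :
    ∑ p ∈ range (r.length + 2),
        ((if noDD (0 :: (b :: r).insertIdx p N) = true ∧
            0 < (0 :: (b :: r).insertIdx p N).getD 1 0
          then f (desL (0 :: (b :: r).insertIdx p N)) else 0) +
        (if noDD (0 :: (b :: r).insertIdx p (-N)) = true ∧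
            0 < (0 :: (b :: r).insertIdx p (-N)).getD 1 0
          then f (desL (0 :: (b :: r).insertIdx p (-N))) else 0)) =
      (2 * (desL (0 :: b :: r) : ℤ) + 1) * f (desL (0 :: b :: r)) +
        (2 * (r.length + 1 : ℤ) - 4 * desL (0 :: b :: r)) * f (desL (0 :: b :: r) + 1) := by
  have hN0 : 0 < N := by have := hN b (by simp); omega
  have hd : ∀ Y, desL (0 :: b :: Y) = desL (b :: Y) := fun Y => by
    simp [desL_cons_cons, hb.le]
  have hn : ∀ Y, noDD (0 :: b :: Y) = true ↔ noDD (b :: Y) = true := fun Y => by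
    rw [noDD_cons_cons]
    exact ⟨fun h => h.1, fun h => ⟨h, by omega⟩⟩
  have h1 := sum_insert_pos N (b :: r) 0 f (by
    intro x hx
    rcases List.mem_cons.1 hx with rfl | hx
    · exact hN0
    · exact (hN x hx).2) hw
  have h2 := sum_insert_neg (-N) r b f (fun x hx => (hN x hx).1) ((hn r).1 hw)
  rw [sum_add_distrib]
  have e1 : ∀ p ∈ range (r.length + 2),
      (if noDD (0 :: (b :: r).insertIdx p N) = true ∧
            0 < (0 :: (b :: r).insertIdx p N).getD 1 0
          then f (desL (0 :: (b :: r).insertIdx p N)) else 0) =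
      (if noDD (0 :: (b :: r).insertIdx p N) = true
          then f (desL (0 :: (b :: r).insertIdx p N)) else 0) := by
    intro p _
    have : 0 < (0 :: (b :: r).insertIdx p N).getD 1 0 := by cases p <;> simpa
    simp only [this, and_true]
  have e2 : ∀ p ∈ range (r.length + 1),
      (if noDD (0 :: (b :: r).insertIdx (p + 1) (-N)) = true ∧
            0 < (0 :: (b :: r).insertIdx (p + 1) (-N)).getD 1 0
          then f (desL (0 :: (b :: r).insertIdx (p + 1) (-N))) else 0) =
      (if noDD (b :: r.insertIdx p (-N)) = true
          then f (desL (b :: r.insertIdx p (-N))) else 0) := by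
    intro p _
    simp [hn, hd, hb]
  have e3 : ¬ (0 < (0 :: (b :: r).insertIdx 0 (-N)).getD 1 0) := by simp; omega
  rw [sum_congr rfl e1, sum_range_succ' (fun p => if noDD (0 :: (b :: r).insertIdx p (-N)) = true ∧
            0 < (0 :: (b :: r).insertIdx p (-N)).getD 1 0
          then f (desL (0 :: (b :: r).insertIdx p (-N))) else 0), sum_congr rfl e2, h2,
    if_neg (fun h => e3 h.2)]
  rw [List.length_cons] at h1
  rw [h1, hd, firstDes_cons_cons, if_neg (by omega)]
  push_cast
  ring

/-- For a word `0, b, …` with `b < 0`, the only insertion of `±N` that makes the letter after `0`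
positive is that of `N` directly after `0`; it is admissible and keeps the descent number. -/
lemma sum_insert_of_neg (N b : ℤ) (r : List ℤ) (f : ℕ → ℤ) (hb : b < 0)
    (hN : ∀ x ∈ b :: r, -N < x ∧ x < N) (hw : noDD (0 :: b :: r) = true) :
    ∑ p ∈ range (r.length + 2),
        ((if noDD (0 :: (b :: r).insertIdx p N) = true ∧
            0 < (0 :: (b :: r).insertIdx p N).getD 1 0
          then f (desL (0 :: (b :: r).insertIdx p N)) else 0) +
        (if noDD (0 :: (b :: r).insertIdx p (-N)) = true ∧
            0 < (0 :: (b :: r).insertIdx p (-N)).getD 1 0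
          then f (desL (0 :: (b :: r).insertIdx p (-N))) else 0)) =
      f (desL (0 :: b :: r)) := by
  have hbN := hN b (by simp)
  have hN0 : 0 < N := by omega
  rw [noDD_cons_cons] at hw
  have h0 : noDD (0 :: N :: b :: r) = true := by
    rw [noDD_cons_cons, noDD_cons_cons]
    exact ⟨⟨hw.1, fun h => hw.2 ⟨hb, h.2⟩⟩, by omega⟩
  rw [sum_range_succ', sum_eq_zero]
  · simp [h0, hN0, not_lt.2 hN0.le, desL_cons_cons, hb, hbN.2]
  · intro p _
    simp [not_lt.2 hb.le]

/-! ### Words of signed permutations and the insertion of the largest entry -/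

lemma filter_insertIdx_of_neg {α : Type*} (q : α → Bool) (x : α) (hx : q x = false) (l : List α) :
    ∀ p, (l.insertIdx p x).filter q = l.filter q := by
  induction l with
  | nil => intro p; cases p <;> simp [hx]
  | cons b l ih => intro p; cases p <;> simp [hx, List.filter_cons, ih]

lemma ofFn_eq_insertIdx {n : ℕ} {α : Type*} (f : Fin (n + 1) → α) (p : Fin (n + 1)) :
    List.ofFn f = (List.ofFn (fun j => f (p.succAbove j))).insertIdx p (f p) := by
  have hp := p.isLt
  apply List.ext_getElem
  · simp [List.length_insertIdx]; omega
  · intro i h1 h2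
    rw [List.getElem_insertIdx]
    simp only [List.length_ofFn] at h1
    split_ifs with h3 h4
    · simp only [List.getElem_ofFn]
      congr 1; ext; simp [Fin.succAbove, Fin.lt_def, h3]
    · simp only [List.getElem_ofFn]
      congr 1; ext; simp [h4]
    · simp only [List.getElem_ofFn]
      congr 1; ext
      have : ¬ (i - 1 < (p : ℕ)) := by omega
      simp [Fin.succAbove, Fin.lt_def, this]; omega

lemma desL_eq_card (w : List ℤ) :
    desL w = ((range (w.length - 1)).filter (fun i => w.getD (i + 1) 0 < w.getD i 0)).card := by
  induction w with
  | nil => simp [desL]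
  | cons a w ih =>
    cases w with
    | nil => simp [desL]
    | cons b r =>
      rw [desL_cons_cons, ih, card_filter, card_filter]
      simp only [List.length_cons, Nat.add_sub_cancel]
      rw [sum_range_succ', add_comm]
      simp

lemma wordFn_eq_getD {n : ℕ} (π : SignedPerm n) (i : ℕ) : wordFn π i = (word π).getD i 0 := by
  unfold wordFn word
  cases i with
  | zero => simp
  | succ i =>
    by_cases h : i < n
    · simp [List.getD_eq_getElem?_getD, Nat.succ_le_of_lt h]
    · simp [h, List.getD_eq_getElem?_getD]

lemma desB_eq_desL {n : ℕ} (π : SignedPerm n) : desB π = desL (word π) := by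
  rw [desL_eq_card]
  simp [desB, wordFn_eq_getD, word]

/-- Insertion of the entry `±(n+1)` into a signed permutation of rank `n`, at (zero-based)
position `p`, with negative sign iff `s = true`. -/
def ins {n : ℕ} (x : SignedPerm n × Fin (n + 1) × Bool) : SignedPerm (n + 1) :=
  (((finSuccEquiv' x.2.1).trans (Equiv.optionCongr x.1.1)).trans (finSuccEquiv' (Fin.last n)).symm,
    x.2.1.insertNth x.2.2 x.1.2)

lemma ins_fst_same {n : ℕ} (π : SignedPerm n) (p : Fin (n + 1)) (s : Bool) :
    (ins (π, p, s)).1 p = Fin.last n := by simp [ins]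

lemma ins_fst_succAbove {n : ℕ} (π : SignedPerm n) (p : Fin (n + 1)) (s : Bool) (j : Fin n) :
    (ins (π, p, s)).1 (p.succAbove j) = (π.1 j).castSucc := by simp [ins]

lemma ins_snd_same {n : ℕ} (π : SignedPerm n) (p : Fin (n + 1)) (s : Bool) :
    (ins (π, p, s)).2 p = s := by simp [ins]

lemma ins_snd_succAbove {n : ℕ} (π : SignedPerm n) (p : Fin (n + 1)) (s : Bool) (j : Fin n) :
    (ins (π, p, s)).2 (p.succAbove j) = π.2 j := by simp [ins]

lemma ins_injective (n : ℕ) : Function.Injective (ins (n := n)) := by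
  rintro ⟨π, p, s⟩ ⟨ρ, q, t⟩ h
  have hpq : p = q := by
    apply (ins (π, p, s)).1.injective
    rw [ins_fst_same, h, ins_fst_same]
  subst hpq
  have hs : s = t := by rw [← ins_snd_same π p s, h, ins_snd_same]
  have h1 : π.1 = ρ.1 := by
    ext j
    have := ins_fst_succAbove π p s j
    rw [h, ins_fst_succAbove] at this
    exact congrArg Fin.val (Fin.castSucc_injective _ this).symm
  have h2 : π.2 = ρ.2 := by
    ext j
    rw [← ins_snd_succAbove π p s j, h, ins_snd_succAbove]
  rw [hs, Prod.ext h1 h2]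

lemma ins_bijective (n : ℕ) : Function.Bijective (ins (n := n)) := by
  rw [Fintype.bijective_iff_injective_and_card]
  refine ⟨ins_injective n, ?_⟩
  simp [Fintype.card_perm, Nat.factorial_succ, pow_succ]
  ring

lemma word_ins {n : ℕ} (π : SignedPerm n) (p : Fin (n + 1)) (s : Bool) :
    word (ins (π, p, s)) =
      0 :: (List.ofFn (entry π)).insertIdx p (if s then -((n : ℤ) + 1) else (n : ℤ) + 1) := by
  have h1 : entry (ins (π, p, s)) p = if s then -((n : ℤ) + 1) else (n : ℤ) + 1 := by
    rw [entry, ins_fst_same, ins_snd_same]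
    cases s <;> simp
  have h2 : (fun j => entry (ins (π, p, s)) (p.succAbove j)) = entry π := by
    funext j
    rw [entry, ins_fst_succAbove, ins_snd_succAbove]
    simp [entry]
  rw [word, ofFn_eq_insertIdx _ p, h1, h2]

lemma entry_bound {n : ℕ} (π : SignedPerm n) (j : Fin n) :
    (entry π j).natAbs ≤ n ∧ entry π j ≠ 0 := by
  have := (π.1 j).isLt
  unfold entry
  split_ifs <;> constructor <;> omega

lemma word_bound {n : ℕ} (π : SignedPerm n) : ∀ x ∈ word π, x.natAbs ≤ n := by
  intro x hx
  rcases List.mem_cons.1 hx with rfl | hx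
  · simp
  · obtain ⟨j, rfl⟩ := (List.mem_ofFn' _ _).1 hx
    exact (entry_bound π j).1

lemma filter_word {n : ℕ} (π : SignedPerm n) :
    (word π).filter (fun a => a.natAbs ≤ n) = word π := by
  rw [List.filter_eq_self]
  intro x hx
  simpa using word_bound π x hx

/-- The words obtained by deleting at least the letter `±(n+1)` are those of `π` itself, so that
only the full word gives a new condition. -/
lemma isSimsun_ins {n : ℕ} (π : SignedPerm n) (p : Fin (n + 1)) (s : Bool) :
    IsSimsun (ins (π, p, s)) ↔ IsSimsun π ∧ noDD (word (ins (π, p, s))) = true := by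
  have key : ∀ m ≤ n, (word (ins (π, p, s))).filter (fun a => a.natAbs ≤ m) =
      (word π).filter (fun a => a.natAbs ≤ m) := by
    intro m hm
    rw [word_ins, word, List.filter_cons, List.filter_cons, filter_insertIdx_of_neg]
    cases s <;> simp <;> omega
  constructor
  · intro h
    refine ⟨fun m hm => ?_, ?_⟩
    · rw [← key m hm]; exact h m (by omega)
    · rw [← filter_word]; exact h _ le_rfl
  · rintro ⟨h1, h2⟩ m hm
    rcases Nat.lt_or_ge n m with h | h
    · obtain rfl : m = n + 1 := by omega
      rwa [filter_word]
    · rw [key m h]; exact h1 m h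

lemma IsSimsun.noDD_word {n : ℕ} {π : SignedPerm n} (h : IsSimsun π) : noDD (word π) = true := by
  rw [← filter_word]; exact h _ le_rfl

/-! ### Summation over all insertions -/

/-- The contribution to `R⁺(n+1,k)` of the insertions into a fixed simsun permutation of rank `n`. -/
lemma sum_ins {n : ℕ} (hn : 1 ≤ n) (π : SignedPerm n) (hπ : IsSimsun π) (k : ℤ) :
    ∑ y : Fin (n + 1) × Bool,
      (if (IsSimsun (ins (π, y)) ∧ (0 < wordFn (ins (π, y)) 1)) ∧ (desB (ins (π, y)) : ℤ) = k
        then (1 : ℤ) else 0) =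
      2 * k * (if (IsSimsun π ∧ 0 < wordFn π 1) ∧ (desB π : ℤ) = k then 1 else 0) +
      (2 * ((n : ℤ) + 1) - 4 * k + 2) *
        (if (IsSimsun π ∧ 0 < wordFn π 1) ∧ (desB π : ℤ) = k - 1 then 1 else 0) +
      (if IsSimsun π ∧ (desB π : ℤ) = k then 1 else 0) := by
  obtain ⟨b, r, hbr⟩ : ∃ b r, List.ofFn (entry π) = b :: r := by
    cases n with
    | zero => omega
    | succ n => exact ⟨_, _, List.ofFn_succ⟩
  have hlen : r.length + 1 = n := by
    have := congrArg List.length hbr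
    simpa using this.symm
  have hw : word π = 0 :: b :: r := by rw [word, hbr]
  have hb0 : b ≠ 0 := by
    have : b ∈ List.ofFn (entry π) := by simp [hbr]
    obtain ⟨j, rfl⟩ := (List.mem_ofFn' _ _).1 this
    exact (entry_bound π j).2
  have hN : ∀ x ∈ b :: r, -((n : ℤ) + 1) < x ∧ x < (n : ℤ) + 1 := by
    intro x hx
    have := word_bound π x (by rw [hw]; exact List.mem_cons_of_mem _ hx)
    omega
  have hdd : noDD (0 :: b :: r) = true := hw ▸ hπ.noDD_word
  set f : ℕ → ℤ := fun d => if (d : ℤ) = k then 1 else 0 with hf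
  have hL : ∑ y : Fin (n + 1) × Bool,
      (if (IsSimsun (ins (π, y)) ∧ (0 < wordFn (ins (π, y)) 1)) ∧ (desB (ins (π, y)) : ℤ) = k
        then (1 : ℤ) else 0) =
      ∑ p ∈ range (r.length + 2),
        ((if noDD (0 :: (b :: r).insertIdx p ((n : ℤ) + 1)) = true ∧
            0 < (0 :: (b :: r).insertIdx p ((n : ℤ) + 1)).getD 1 0
          then f (desL (0 :: (b :: r).insertIdx p ((n : ℤ) + 1))) else 0) +
        (if noDD (0 :: (b :: r).insertIdx p (-((n : ℤ) + 1))) = true ∧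
            0 < (0 :: (b :: r).insertIdx p (-((n : ℤ) + 1))).getD 1 0
          then f (desL (0 :: (b :: r).insertIdx p (-((n : ℤ) + 1)))) else 0)) := by
    rw [show r.length + 2 = n + 1 by omega, Finset.sum_range, Fintype.sum_prod_type]
    refine sum_congr rfl fun p _ => ?_
    rw [Fintype.sum_bool, add_comm]
    simp only [isSimsun_ins, hπ, true_and, wordFn_eq_getD, desB_eq_desL, word_ins, hbr, hf,
      ← ite_and, if_true, Bool.false_eq_true, if_false]
  have hpos : wordFn π 1 = b := by rw [wordFn_eq_getD, hw]; simp
  rw [hL, hpos, desB_eq_desL, hw]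
  generalize hd : desL (0 :: b :: r) = d
  rcases lt_or_gt_of_ne hb0 with hb | hb
  · rw [sum_insert_of_neg _ b r f hb hN hdd, hd]
    simp [hf, hπ, not_lt.2 hb.le]
  · rw [sum_insert_of_pos _ b r f hb hN hdd, hd]
    have : (r.length : ℤ) + 1 = n := by exact_mod_cast hlen
    rw [this]
    simp only [hf, hπ, hb, true_and]
    by_cases h1 : (d : ℤ) = k
    · have h2 : ¬ ((d : ℤ) = k - 1) := by omega
      have h3 : ¬ ((d : ℤ) + 1 = k) := by omega
      push_cast
      rw [if_pos h1, if_neg h2, if_neg h3, h1]; ring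
    · by_cases h2 : (d : ℤ) = k - 1
      · simp [h2]; ring
      · have h3 : ¬ ((d : ℤ) + 1 = k) := by omega
        simp [h1, h2, h3]

lemma Rcnt_eq_sum (n : ℕ) (k : ℤ) :
    Rcnt n k = ∑ π : SignedPerm n, if IsSimsun π ∧ (desB π : ℤ) = k then 1 else 0 := by
  rw [Rcnt, RB, filter_filter, card_filter]; push_cast; rfl

lemma Rpcnt_eq_sum (n : ℕ) (hn : n ≠ 0) (k : ℤ) :
    Rpcnt n k = ∑ π : SignedPerm n,
      if (IsSimsun π ∧ 0 < wordFn π 1) ∧ (desB π : ℤ) = k then 1 else 0 := by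
  rw [Rpcnt, RBp, RB, filter_filter, filter_filter, card_filter]; push_cast
  simp [hn, and_assoc]

/-- For all integers `n ≥ 2`, `k ≥ 0`:
`R⁺(n,k) = 2k·R⁺(n−1,k) + (2n−4k+2)·R⁺(n−1,k−1) + R(n−1,k)`. -/
theorem stmt0 (n : ℕ) (hn : 2 ≤ n) (k : ℤ) (hk : 0 ≤ k) :
    Rpcnt n k =
      2 * k * Rpcnt (n - 1) k + (2 * (n : ℤ) - 4 * k + 2) * Rpcnt (n - 1) (k - 1) +
        Rcnt (n - 1) k := by
  obtain ⟨n, rfl⟩ : ∃ m, n = m + 1 := ⟨n - 1, by omega⟩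
  rw [Nat.add_sub_cancel, Rpcnt_eq_sum _ (by omega), Rpcnt_eq_sum _ (by omega),
    Rpcnt_eq_sum _ (by omega), Rcnt_eq_sum, mul_sum, mul_sum, ← sum_add_distrib,
    ← sum_add_distrib, ← (ins_bijective n).sum_comp, Fintype.sum_prod_type]
  refine sum_congr rfl fun π _ => ?_
  by_cases hπ : IsSimsun π
  · rw [sum_ins (by omega) π hπ k]; push_cast; rfl
  · rw [sum_eq_zero]
    · simp [hπ]
    · rintro ⟨p, s⟩ _
      simp [isSimsun_ins, hπ]
end

section
/- For every n ≥ 0, the polynomial R⁺_n(x) has degree ⌊n/2⌋ and the polynomial R_n(x) has degree ⌈n/2⌉; for every n ≥ 1, the polynomial R⁻_n(x) has degree ⌈n/2⌉. -/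
/-!
The full word of a simsun permutation has no double descent, so no two of its `n` gaps
`(π(i), π(i+1))` that are consecutive can both be descents; hence `des_B ≤ ⌈n/2⌉`, and
`des_B ≤ ⌊n/2⌋` if moreover the first gap is an ascent, i.e. `π(1) > 0`
(`card_le_of_no_consec`, `desB_le`).

Both bounds are attained (`extremal`, `le_desB_extremal`): by `2 1 4 3 6 5 ⋯` among the permutations with
`π(1) > 0`, and by `-1 3 2 5 4 7 6 ⋯` among those with `π(1) < 0`. They are simsun because
their words satisfy `i - 2 ≤ π(i) ≤ i + 1`, which excludes any decreasing subsequence of length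
three, consecutive or not (`noDD_map_of_bounds`); so no deletion of letters can create a double
descent.

All coefficients of the descent polynomials are nonnegative, so each degree is the maximal
descent number (`natDegree_sum_X_pow`).
-/

open Finset

open Polynomial in
/-- The descent polynomial `R_n(x) = Σ_{π ∈ RB_n} x^{des_B(π)}`. -/
noncomputable def Rpoly (n : ℕ) : ℚ[X] := ∑ π ∈ RB n, X ^ desB π
open Polynomial in
noncomputable def Rppoly (n : ℕ) : ℚ[X] := ∑ π ∈ RBp n, X ^ desB π
open Polynomial in
noncomputable def Rmpoly (n : ℕ) : ℚ[X] := ∑ π ∈ RBm n, X ^ desB π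
open Polynomial in
noncomputable def Dpoly (n : ℕ) : ℚ[X] := ∑ π ∈ RD n, X ^ desB π
open Polynomial in
noncomputable def Tpoly (n : ℕ) : ℚ[X] := ∑ π ∈ RT n, X ^ desB π
open Polynomial in
noncomputable def Dppoly (n : ℕ) : ℚ[X] := ∑ π ∈ RDp n, X ^ desB π
open Polynomial in
noncomputable def Dmpoly (n : ℕ) : ℚ[X] := ∑ π ∈ RDm n, X ^ desB π
open Polynomial in
noncomputable def Tppoly (n : ℕ) : ℚ[X] := ∑ π ∈ RTp n, X ^ desB π
open Polynomial in
noncomputable def Tmpoly (n : ℕ) : ℚ[X] := ∑ π ∈ RTm n, X ^ desB π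

/-! ### Words without double descents -/

lemma word_eq_map {n : ℕ} (π : SignedPerm n) :
    word π = (List.range (n + 1)).map (wordFn π) := by
  apply List.ext_getElem
  · simp [word]
  · intro i h1 h2
    simp only [word, List.length_cons, List.length_ofFn] at h1
    cases i with
    | zero => simp [word, wordFn]
    | succ k =>
      have : k + 1 ≤ n := by omega
      simp [word, wordFn, this]

lemma wordFn_natAbs_le {n : ℕ} (π : SignedPerm n) (i : ℕ) : (wordFn π i).natAbs ≤ n := by
  unfold wordFn
  split_ifs with h
  · have := (π.1 ⟨i - 1, by omega⟩).2
    unfold entry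
    split_ifs <;> omega
  · simp

lemma noDD_getElem (L : List ℤ) (h : noDD L = true) (i : ℕ) (hi : i + 2 < L.length) :
    ¬ (L[i + 1] < L[i] ∧ L[i + 2] < L[i + 1]) := by
  induction L generalizing i with
  | nil => simp at hi
  | cons a t ih =>
    match t, ih with
    | [], _ => simp at hi
    | [b], _ => simp at hi
    | b :: c :: r, ih =>
      simp only [noDD, Bool.and_eq_true, Bool.not_eq_true', Bool.and_eq_false_iff,
        decide_eq_false_iff_not] at h
      cases i with
      | zero =>
        simp only [List.getElem_cons_succ, List.getElem_cons_zero]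
        tauto
      | succ k => exact ih h.2 k (by simpa using hi)

/-- If `k - 2 ≤ f k ≤ k + 1` for every index `k`, then a descent `f i > f j > f k` along
`i < j < k` would give `f i ≥ f k + 2 ≥ k ≥ i + 2`. -/
lemma noDD_map_of_bounds (f : ℕ → ℤ) (l : List ℕ) (hl : l.Pairwise (· < ·))
    (hf : ∀ i ∈ l, (i : ℤ) - 2 ≤ f i ∧ f i ≤ i + 1) : noDD (l.map f) = true := by
  induction l with
  | nil => simp [noDD]
  | cons a t ih =>
    match t, ih with
    | [], _ => simp [noDD]
    | [b], _ => simp [noDD]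
    | b :: c :: r, ih =>
      have ih' := ih hl.of_cons (fun i hi => hf i (List.mem_cons_of_mem _ hi))
      simp only [List.map_cons] at ih' ⊢
      have hab : a < b := by
        have := List.pairwise_cons.1 hl
        exact this.1 b (by simp)
      have hbc : b < c := by
        have := List.pairwise_cons.1 hl.of_cons
        exact this.1 c (by simp)
      have h1 := hf a (by simp)
      have h2 := hf c (by simp)
      simp only [noDD, Bool.and_eq_true, Bool.not_eq_true', Bool.and_eq_false_iff,
        decide_eq_false_iff_not]
      refine ⟨?_, ih'⟩
      omega

lemma isSimsun_of_bounds {n : ℕ} (π : SignedPerm n)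
    (h : ∀ i ≤ n, (i : ℤ) - 2 ≤ wordFn π i ∧ wordFn π i ≤ i + 1) : IsSimsun π := by
  intro m _
  rw [word_eq_map, List.filter_map]
  apply noDD_map_of_bounds
  · exact List.Pairwise.filter _ List.pairwise_lt_range
  · intro i hi
    have := List.mem_range.1 (List.mem_filter.1 hi).1
    exact h i (by omega)

/-! ### Upper bounds for the descent number -/

lemma IsSimsun.no_consec {n : ℕ} {π : SignedPerm n} (h : IsSimsun π) (i : ℕ) (hi : i + 2 ≤ n) :
    ¬ (wordFn π (i + 1) < wordFn π i ∧ wordFn π (i + 2) < wordFn π (i + 1)) := by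
  have h1 := h n le_rfl
  rw [word_eq_map, List.filter_eq_self.2] at h1
  · have := noDD_getElem _ h1 i (by simp; omega)
    simpa using this
  · intro a ha
    obtain ⟨j, -, rfl⟩ := List.mem_map.1 ha
    simpa using wordFn_natAbs_le π j

/-- The map `i ↦ ⌊(i - q)/2⌋` is injective on a set containing no two consecutive integers. -/
lemma card_le_of_no_consec (n q : ℕ) (D : Finset ℕ) (h1 : ∀ i ∈ D, q ≤ i ∧ i < n)
    (h2 : ∀ i ∈ D, i + 1 ∉ D) : D.card ≤ (n - q + 1) / 2 := by
  rw [← Finset.card_range ((n - q + 1) / 2)]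
  apply Finset.card_le_card_of_injOn (fun i => (i - q) / 2)
  · intro i hi
    have := h1 i hi
    simp only [Finset.coe_range, Set.mem_Iio]
    omega
  · intro i hi j hj hij
    have hi1 := h1 i hi
    have hj1 := h1 j hj
    simp only at hij
    rcases lt_trichotomy i j with h | h | h
    · exact absurd ((show j = i + 1 by omega) ▸ hj) (h2 i hi)
    · exact h
    · exact absurd ((show i = j + 1 by omega) ▸ hi) (h2 j hj)

lemma desB_le {n : ℕ} {π : SignedPerm n} (h : IsSimsun π) (q : ℕ)
    (hq : ∀ i < q, ¬ wordFn π (i + 1) < wordFn π i) : desB π ≤ (n - q + 1) / 2 := by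
  apply card_le_of_no_consec
  · intro i hi
    rw [Finset.mem_filter, Finset.mem_range] at hi
    refine ⟨?_, hi.1⟩
    by_contra hlt
    exact hq i (by omega) hi.2
  · intro i hi hi'
    rw [Finset.mem_filter, Finset.mem_range] at hi hi'
    exact h.no_consec i (by omega) ⟨hi.2, hi'.2⟩

lemma desB_le_of_mem_RB {n : ℕ} {π : SignedPerm n} (h : π ∈ RB n) : desB π ≤ (n + 1) / 2 :=
  desB_le (Finset.mem_filter.1 h).2 0 (by simp)

lemma desB_le_of_mem_RBp {n : ℕ} {π : SignedPerm n} (h : π ∈ RBp n) : desB π ≤ n / 2 := by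
  obtain ⟨h1, h2⟩ := Finset.mem_filter.1 h
  rcases Nat.eq_zero_or_pos n with rfl | hn
  · simp [desB]
  · have h0 : 0 < wordFn π 1 := h2.resolve_right hn.ne'
    have := desB_le (Finset.mem_filter.1 h1).2 1 (by
      intro i hi
      obtain rfl : i = 0 := by omega
      have : wordFn π 0 = 0 := by simp [wordFn]
      simp only [zero_add, this]
      omega)
    omega

/-! ### Extremal permutations -/

/-- Swaps the neighbours `j, j + 1` of `{0, …, n-1}` for every `j` with `j + p` even, and fixes
the points left over at the two ends (for odd `p`, truncated subtraction fixes `0`). -/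
def swapFn (n p j : ℕ) : ℕ :=
  if (j + p) % 2 = 0 then (if j + 1 < n then j + 1 else j) else j - 1

lemma swapFn_lt {n p j : ℕ} (h : j < n) : swapFn n p j < n := by
  unfold swapFn; split_ifs <;> omega

lemma swapFn_swapFn {n p j : ℕ} (h : j < n) : swapFn n p (swapFn n p j) = j := by
  unfold swapFn; split_ifs <;> omega

/-- The signed permutation `2 1 4 3 6 5 ⋯` for `p = 0`, and `-1 3 2 5 4 ⋯` for `p = 1`. -/
def extremal (n p : ℕ) : SignedPerm n :=
  (Function.Involutive.toPerm (fun j : Fin n => (⟨swapFn n p j, swapFn_lt j.2⟩ : Fin n))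
    (fun j => Fin.ext (swapFn_swapFn j.2)), fun j => decide (p = 1 ∧ (j : ℕ) = 0))

lemma wordFn_extremal (n p i : ℕ) : wordFn (extremal n p) i =
    if 1 ≤ i ∧ i ≤ n then
      (if p = 1 ∧ i = 1 then -1 else 1) * ((swapFn n p (i - 1) : ℤ) + 1) else 0 := by
  unfold wordFn
  split_ifs with h h'
  · simp [entry, extremal, h']
  · have : ¬ (p = 1 ∧ i - 1 = 0) := by omega
    simp only [entry, extremal, this]
    simp [Function.Involutive.toPerm]
  · rfl

lemma extremal_bounds (n p i : ℕ) (hi : i ≤ n) :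
    (i : ℤ) - 2 ≤ wordFn (extremal n p) i ∧ wordFn (extremal n p) i ≤ i + 1 := by
  rw [wordFn_extremal]
  unfold swapFn
  split_ifs <;> omega

lemma le_desB_extremal (n p : ℕ) (hp : p ≤ 1) : (n + p) / 2 ≤ desB (extremal n p) := by
  rw [← Finset.card_range ((n + p) / 2)]
  -- The descents sit at the gaps `i` with `i + p` odd.
  apply Finset.card_le_card_of_injOn (fun k => 2 * k + 1 - p)
  · intro k hk
    have hk' : k < (n + p) / 2 := by simpa using hk
    simp only [Finset.coe_filter, Finset.mem_range, Set.mem_ofPred_eq]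
    refine ⟨by omega, ?_⟩
    rw [wordFn_extremal, wordFn_extremal]
    unfold swapFn
    split_ifs <;> omega
  · intro i _ j _ hij
    simp only at hij
    omega

lemma extremal_mem_RB (n p : ℕ) : extremal n p ∈ RB n :=
  Finset.mem_filter.2 ⟨Finset.mem_univ _, isSimsun_of_bounds _ (fun i => extremal_bounds n p i)⟩

lemma extremal_mem_RBp (n : ℕ) : extremal n 0 ∈ RBp n := by
  refine Finset.mem_filter.2 ⟨extremal_mem_RB n 0, ?_⟩
  rcases Nat.eq_zero_or_pos n with hn | hn
  · exact Or.inr hn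
  · have hn' : 1 ≤ n := hn
    left
    simp only [wordFn_extremal, le_refl, hn', true_and, if_true, zero_ne_one, false_and, if_false]
    omega

lemma extremal_mem_RBm (n : ℕ) (hn : 1 ≤ n) : extremal n 1 ∈ RBm n := by
  refine Finset.mem_filter.2 ⟨extremal_mem_RB n 1, ?_⟩
  rw [wordFn_extremal]
  split_ifs <;> omega

/-! ### Degrees -/

open Polynomial in
lemma natDegree_sum_X_pow {α : Type*} (S : Finset α) (d : α → ℕ) (N : ℕ)
    (h1 : ∀ a ∈ S, d a ≤ N) (a : α) (ha : a ∈ S) (h2 : N ≤ d a) :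
    (∑ a ∈ S, (X : ℚ[X]) ^ d a).natDegree = N := by
  apply le_antisymm
  · apply natDegree_sum_le_of_forall_le
    intro b hb
    simpa using h1 b hb
  · apply le_natDegree_of_ne_zero
    simp only [finsetSum_coeff, coeff_X_pow, Finset.sum_boole]
    have hmem : a ∈ S.filter (fun x => N = d x) :=
      Finset.mem_filter.2 ⟨ha, le_antisymm h2 (h1 a ha)⟩
    exact_mod_cast Finset.card_ne_zero_of_mem hmem

/-- `deg R⁺_n = ⌊n/2⌋`, `deg R_n = ⌈n/2⌉` for `n ≥ 0`, and `deg R⁻_n = ⌈n/2⌉` for `n ≥ 1`. -/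
theorem stmt4 :
    (∀ n : ℕ, (Rppoly n).natDegree = n / 2 ∧ (Rpoly n).natDegree = (n + 1) / 2) ∧
      ∀ n : ℕ, 1 ≤ n → (Rmpoly n).natDegree = (n + 1) / 2 := by
  refine ⟨fun n => ⟨?_, ?_⟩, fun n hn => ?_⟩
  · exact natDegree_sum_X_pow _ _ _ (fun _ h => desB_le_of_mem_RBp h) _ (extremal_mem_RBp n)
      (le_desB_extremal n 0 (by omega))
  · exact natDegree_sum_X_pow _ _ _ (fun _ h => desB_le_of_mem_RB h) _
      (extremal_mem_RB n 1) (le_desB_extremal n 1 le_rfl)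
  · exact natDegree_sum_X_pow _ _ _
      (fun _ h => desB_le_of_mem_RB (Finset.mem_filter.1 h).1) _ (extremal_mem_RBm n hn)
      (le_desB_extremal n 1 le_rfl)
end
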